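/- Let n ≥ 3 and let λ be a partition of n. Then both Σ_{π ∈ C_λ} occ₍₁₃₂₎(π) and Σ_{π ∈ C_λ} occ₍₂₁₃₎(π) are equal to |C_λ| · ( (n−2)/6 + (n−3)·X₁/(2n(n−1)) − X₂/(2n(n−1)) − 3·X₃/(2n(n−1)) − X₄/(2n(n−1)) ), where occ₍₁₃₂₎(π) = #{i : 1 ≤ i ≤ n−2, π(i) < π(i+2) < π(i+1)} and occ₍₂₁₃₎(π) = #{i : 1 ≤ i ≤ n−2, π(i+1) < π(i) < π(i+2)} count occurrences of the consecutive (vincular) patterns (132) and (213) in π. -/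

import Mathlib

open Equiv Finset

/-- The conjugacy class of permutations of `Fin n` with cycle type `lam`
(cycle type includes fixed points as parts of size 1, via `Equiv.Perm.partition`). -/
def conjClass (n : ℕ) (lam : n.Partition) : Finset (Equiv.Perm (Fin n)) :=
  Finset.univ.filter fun π => (Equiv.Perm.partition π).parts = lam.parts



def cod {n : ℕ} (u v w x : Fin n) : ℕ := if x = u then 0 else if x = v then 1 else if x = w then 2 else 3

def wt (B A1 A2 : ℚ) (i j k : ℕ) : ℚ :=
  if i = 3 then (if j = 3 then (if k = 3 then B/6 else A2) else if k = 3 then A1 else if k < j then B/2 else 0)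
  else if j = 3 then (if k = 3 then A1 else if i < k then B/2 else 0)
  else if k = 3 then 0 else if i < k ∧ k < j then B else 0

def WW {n : ℕ} (B A1 A2 : ℚ) (u v w x y z : Fin n) : ℚ :=
  wt B A1 A2 (cod u v w x) (cod u v w y) (cod u v w z)

def RR {n : ℕ} (B : ℚ) (u v w x y z : Fin n) : ℚ :=
  B * (1/6 + (1/2) * (if x = u ∧ y = w then 1 else 0) - (1/2) * (if x = v ∧ y = w then 1 else 0)
   - (1/6) * (if x = u ∧ y = v ∧ z = w then 1 else 0) + (1/6) * (if x = v ∧ y = w ∧ z = u then 1 else 0))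

set_option maxHeartbeats 4000000 in
lemma sym_id {n : ℕ} (B A1 A2 : ℚ) (hB : 4 * A1 + 2 * A2 = B) (u v w x y z : Fin n)
  (huv : u ≠ v) (huw : u ≠ w) (hvw : v ≠ w) (hxy : x ≠ y) (hxz : x ≠ z) (hyz : y ≠ z) :
  WW B A1 A2 u v w x y z + WW B A1 A2 u w v x z y + WW B A1 A2 v u w y x z
   + WW B A1 A2 v w u y z x + WW B A1 A2 w u v z x y + WW B A1 A2 w v u z y x =
  RR B u v w x y z + RR B u w v x z y + RR B v u w y x z
   + RR B v w u y z x + RR B w u v z x y + RR B w v u z y x := by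
  have key : ∀ t : Fin n, t = u ∨ t = v ∨ t = w ∨ (t ≠ u ∧ t ≠ v ∧ t ≠ w) := by intro t; tauto
  have h1 := huv.symm
  have h2 := huw.symm
  have h3 := hvw.symm
  rcases key x with hx | hx | hx | ⟨hx1, hx2, hx3⟩ <;>
  rcases key y with hy | hy | hy | ⟨hy1, hy2, hy3⟩ <;>
  rcases key z with hz | hz | hz | ⟨hz1, hz2, hz3⟩ <;>
  first
  | (exfalso; subst_vars; simp_all; done)
  | (try subst x
     try subst y
     try subst z
     simp [WW, RR, wt, cod, *]
     try linarith)

lemma ext_tuple {n k : ℕ} (s t : Fin k → Fin n) (hs : Function.Injective s) (ht : Function.Injective t) :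
    ∃ τ : Perm (Fin n), ∀ i, τ (s i) = t i := by
  have := Equiv.Perm.isMultiplyPretransitive (Fin n) k
  obtain ⟨τ, h⟩ := MulAction.exists_smul_eq (Perm (Fin n)) (⟨s, hs⟩ : Fin k ↪ Fin n) ⟨t, ht⟩
  refine ⟨τ, fun i => ?_⟩
  have := DFunLike.congr_fun h i
  simpa using this

open Classical in
noncomputable def NN {n : ℕ} (P : Perm (Fin n) → Prop) : ℚ := ∑ σ : Perm (Fin n), if P σ then 1 else 0

lemma NN_congr {n : ℕ} {P Q : Perm (Fin n) → Prop} (h : ∀ σ, P σ ↔ Q σ) : NN P = NN Q := by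
  have : P = Q := funext fun σ => propext (h σ)
  rw [this]

lemma NN_equiv {n : ℕ} {P Q : Perm (Fin n) → Prop} (e : Perm (Fin n) ≃ Perm (Fin n))
    (h : ∀ σ, P σ ↔ Q (e σ)) : NN P = NN Q := by
  unfold NN
  classical
  refine Fintype.sum_equiv e _ _ fun σ => ?_
  simp only [h]

lemma NN_right {n : ℕ} {P Q : Perm (Fin n) → Prop} (τ : Perm (Fin n))
    (h : ∀ σ, P σ ↔ Q (σ * τ)) : NN P = NN Q := NN_equiv (Equiv.mulRight τ) h

lemma NN_zero {n : ℕ} {P : Perm (Fin n) → Prop} (h : ∀ σ, ¬ P σ) : NN P = 0 := by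
  simp [NN, h]

lemma NN_split {n : ℕ} {P Q R : Perm (Fin n) → Prop} (h : ∀ σ, P σ ↔ Q σ ∨ R σ) (h' : ∀ σ, ¬ (Q σ ∧ R σ)) :
   NN P = NN Q + NN R := by
  classical
  unfold NN
  rw [← Finset.sum_add_distrib]
  refine Finset.sum_congr rfl fun σ _ => ?_
  have := h σ
  have := h' σ
  by_cases Q σ <;> by_cases R σ <;> simp_all

def blk {n : ℕ} (u v w : Fin n) (σ : Perm (Fin n)) : Prop := (σ u : ℕ) + 1 = σ v ∧ (σ v : ℕ) + 1 = σ w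

lemma ne_val {n : ℕ} {u v : Fin n} (h : u ≠ v) (σ : Perm (Fin n)) : (σ u : ℕ) ≠ σ v := by
  intro h'; exact h (σ.injective (Fin.ext h'))

lemma exB {n : ℕ} : ∃ B : ℚ, ∀ u v w : Fin n, u ≠ v → u ≠ w → v ≠ w → NN (blk u v w) = B := by
  by_cases H : ∃ u v w : Fin n, u ≠ v ∧ u ≠ w ∧ v ≠ w
  · obtain ⟨u, v, w, h1, h2, h3⟩ := H
    refine ⟨NN (blk u v w), fun u' v' w' k1 k2 k3 => ?_⟩
    obtain ⟨τ, hτ⟩ := ext_tuple ![u, v, w] ![u', v', w']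
      (by simp [Function.Injective, Fin.forall_fin_succ, *, Ne.symm h1, Ne.symm h2, Ne.symm h3])
      (by simp [Function.Injective, Fin.forall_fin_succ, *, Ne.symm k1, Ne.symm k2, Ne.symm k3])
    simp [Fin.forall_fin_succ] at hτ
    apply NN_right τ
    intro σ
    simp [blk, hτ]
  · refine ⟨0, fun u v w h1 h2 h3 => (H ⟨u, v, w, h1, h2, h3⟩).elim⟩

lemma rev_equiv {n : ℕ} {P Q : Perm (Fin n) → Prop} (τ : Perm (Fin n))
    (h : ∀ σ, P σ ↔ Q (Fin.revPerm * σ * τ)) : NN P = NN Q :=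
  NN_equiv ((Equiv.mulLeft Fin.revPerm).trans (Equiv.mulRight τ)) h

lemma half {n : ℕ} {u v w y : Fin n} (h1 : u ≠ v) (h2 : u ≠ w) (h3 : v ≠ w) (h4 : y ≠ u) (h5 : y ≠ v) (h6 : y ≠ w) :
    NN (fun σ => blk u v w σ ∧ σ u < σ y) = NN (blk u v w) / 2 ∧
    NN (fun σ => blk u v w σ ∧ σ y < σ u) = NN (blk u v w) / 2 := by
  have e1 : NN (fun σ => blk u v w σ ∧ σ u < σ y) = NN (fun σ => blk u v w σ ∧ σ y < σ u) := by
    apply rev_equiv (swap u w)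
    intro σ
    simp only [blk, Perm.mul_apply, swap_apply_left, swap_apply_right, swap_apply_of_ne_of_ne h1.symm h3,
      swap_apply_of_ne_of_ne h4 h6, Fin.revPerm_apply, Fin.val_rev, Fin.lt_def]
    have := ne_val h4 σ
    have := ne_val h5 σ
    have := ne_val h6 σ
    have := (σ u).2
    have := (σ v).2
    have := (σ w).2
    have := (σ y).2
    omega
  have e2 : NN (blk u v w) = NN (fun σ => blk u v w σ ∧ σ u < σ y) + NN (fun σ => blk u v w σ ∧ σ y < σ u) := by
    apply NN_split
    · intro σ
      have := ne_val h4 σ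
      simp only [Fin.lt_def, ← and_or_left, iff_self_and]
      intro _
      omega
    · intro σ; simp only [Fin.lt_def]; omega
  constructor <;> linarith

lemma six_split {n : ℕ} (P : Perm (Fin n) → Prop) (x y z : Fin n) (h1 : x ≠ y) (h2 : x ≠ z) (h3 : y ≠ z) :
    NN P = NN (fun σ => P σ ∧ σ x < σ y ∧ σ y < σ z) + NN (fun σ => P σ ∧ σ x < σ z ∧ σ z < σ y)
     + NN (fun σ => P σ ∧ σ y < σ x ∧ σ x < σ z) + NN (fun σ => P σ ∧ σ y < σ z ∧ σ z < σ x)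
     + NN (fun σ => P σ ∧ σ z < σ x ∧ σ x < σ y) + NN (fun σ => P σ ∧ σ z < σ y ∧ σ y < σ x) := by
  classical
  unfold NN
  simp only [← Finset.sum_add_distrib]
  refine Finset.sum_congr rfl fun σ _ => ?_
  by_cases hP : P σ
  · have := ne_val h1 σ
    have := ne_val h2 σ
    have := ne_val h3 σ
    simp only [hP, true_and, Fin.lt_def, if_true]
    by_cases a : (σ x : ℕ) < σ y <;> by_cases b : (σ x : ℕ) < σ z <;> by_cases c : (σ y : ℕ) < σ z <;>
    [skip; skip; skip; skip; skip; skip; skip; skip] <;>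
    first
    | omega
    | (have a' : (σ y : ℕ) < σ x ↔ ¬ (σ x : ℕ) < σ y := by omega
       have b' : (σ z : ℕ) < σ x ↔ ¬ (σ x : ℕ) < σ z := by omega
       have c' : (σ z : ℕ) < σ y ↔ ¬ (σ y : ℕ) < σ z := by omega
       simp [a', b', c', a, b, c])
  · simp [hP]

lemma six {n : ℕ} {u v w x y z : Fin n}
    (hx1 : x ≠ u) (hx2 : x ≠ v) (hx3 : x ≠ w) (hy1 : y ≠ u) (hy2 : y ≠ v) (hy3 : y ≠ w)
    (hz1 : z ≠ u) (hz2 : z ≠ v) (hz3 : z ≠ w) (h1 : x ≠ y) (h2 : x ≠ z) (h3 : y ≠ z) :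
    NN (fun σ => blk u v w σ ∧ σ x < σ z ∧ σ z < σ y) = NN (blk u v w) / 6 := by
  have sw : ∀ a b c : Fin n, a ≠ u → a ≠ v → a ≠ w → b ≠ u → b ≠ v → b ≠ w → a ≠ c → b ≠ c →
     NN (fun σ => blk u v w σ ∧ σ a < σ b ∧ σ b < σ c) = NN (fun σ => blk u v w σ ∧ σ b < σ a ∧ σ a < σ c) := by
    intro a b c a1 a2 a3 b1 b2 b3 ac bc
    apply NN_right (swap a b)
    intro σ
    simp [blk, swap_apply_of_ne_of_ne a1.symm b1.symm, swap_apply_of_ne_of_ne a2.symm b2.symm,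
      swap_apply_of_ne_of_ne a3.symm b3.symm, swap_apply_of_ne_of_ne ac.symm bc.symm]
  have sw' : ∀ a b c : Fin n, b ≠ u → b ≠ v → b ≠ w → c ≠ u → c ≠ v → c ≠ w → a ≠ c → a ≠ b →
     NN (fun σ => blk u v w σ ∧ σ a < σ b ∧ σ b < σ c) = NN (fun σ => blk u v w σ ∧ σ a < σ c ∧ σ c < σ b) := by
    intro a b c a1 a2 a3 b1 b2 b3 ac bc
    apply NN_right (swap b c)
    intro σ
    simp [blk, swap_apply_of_ne_of_ne a1.symm b1.symm, swap_apply_of_ne_of_ne a2.symm b2.symm,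
      swap_apply_of_ne_of_ne a3.symm b3.symm, swap_apply_of_ne_of_ne ac bc, swap_apply_of_ne_of_ne bc ac]
  have S := six_split (blk u v w) x y z h1 h2 h3
  have q1 := sw x y z hx1 hx2 hx3 hy1 hy2 hy3 h2 h3
  have q2 := sw' x y z hy1 hy2 hy3 hz1 hz2 hz3 h2 h1
  have q3 := sw x z y hx1 hx2 hx3 hz1 hz2 hz3 h1 h3.symm
  have q4 := sw' y x z hx1 hx2 hx3 hz1 hz2 hz3 h3 h1.symm
  have q5 := sw' z x y hx1 hx2 hx3 hy1 hy2 hy3 h3.symm h2.symm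
  linarith

lemma exA {n : ℕ} {B : ℚ} (hB : ∀ u v w : Fin n, u ≠ v → u ≠ w → v ≠ w → NN (blk u v w) = B) :
  ∃ A1 A2 : ℚ, 4 * A1 + 2 * A2 = B ∧ ∀ u v w y z : Fin n, u ≠ v → u ≠ w → v ≠ w →
    y ≠ u → y ≠ v → y ≠ w → z ≠ u → z ≠ v → z ≠ w → y ≠ z →
    NN (fun σ => blk u v w σ ∧ σ u < σ z ∧ σ z < σ y) = A1 ∧
    NN (fun σ => blk u v w σ ∧ σ z < σ u ∧ σ u < σ y) = A2 ∧
    NN (fun σ => blk u v w σ ∧ σ y < σ z ∧ σ z < σ u) = A1 := by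
  have r3 : ∀ u v w y z : Fin n, u ≠ v → u ≠ w → v ≠ w →
    y ≠ u → y ≠ v → y ≠ w → z ≠ u → z ≠ v → z ≠ w → y ≠ z →
    NN (fun σ => blk u v w σ ∧ σ y < σ z ∧ σ z < σ u) = NN (fun σ => blk u v w σ ∧ σ u < σ z ∧ σ z < σ y) := by
    intro u v w y z h1 h2 h3 h4 h5 h6 h7 h8 h9 h10
    apply rev_equiv (swap u w)
    intro σ
    simp only [blk, Perm.mul_apply, swap_apply_left, swap_apply_right, swap_apply_of_ne_of_ne h1.symm h3,
      swap_apply_of_ne_of_ne h4 h6, swap_apply_of_ne_of_ne h7 h9, Fin.revPerm_apply, Fin.val_rev, Fin.lt_def]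
    have := ne_val h7 σ
    have := ne_val h8 σ
    have := ne_val h9 σ
    have := (σ u).2
    have := (σ v).2
    have := (σ w).2
    have := (σ y).2
    have := (σ z).2
    omega
  by_cases H : ∃ u v w y z : Fin n, u ≠ v ∧ u ≠ w ∧ v ≠ w ∧
    y ≠ u ∧ y ≠ v ∧ y ≠ w ∧ z ≠ u ∧ z ≠ v ∧ z ≠ w ∧ y ≠ z
  · obtain ⟨u, v, w, y, z, h1, h2, h3, h4, h5, h6, h7, h8, h9, h10⟩ := H
    have main : ∀ u' v' w' y' z' : Fin n, u' ≠ v' → u' ≠ w' → v' ≠ w' →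
      y' ≠ u' → y' ≠ v' → y' ≠ w' → z' ≠ u' → z' ≠ v' → z' ≠ w' → y' ≠ z' →
      NN (fun σ => blk u' v' w' σ ∧ σ u' < σ z' ∧ σ z' < σ y') = NN (fun σ => blk u v w σ ∧ σ u < σ z ∧ σ z < σ y) ∧
      NN (fun σ => blk u' v' w' σ ∧ σ z' < σ u' ∧ σ u' < σ y') = NN (fun σ => blk u v w σ ∧ σ z < σ u ∧ σ u < σ y) := by
      intro u' v' w' y' z' k1 k2 k3 k4 k5 k6 k7 k8 k9 k10
      obtain ⟨τ, hτ⟩ := ext_tuple ![u, v, w, y, z] ![u', v', w', y', z']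
        (by simp [Function.Injective, Fin.forall_fin_succ, *, Ne.symm h1, Ne.symm h2, Ne.symm h3,
              Ne.symm h4, Ne.symm h5, Ne.symm h6, Ne.symm h7, Ne.symm h8, Ne.symm h9, Ne.symm h10])
        (by simp [Function.Injective, Fin.forall_fin_succ, *, Ne.symm k1, Ne.symm k2, Ne.symm k3,
              Ne.symm k4, Ne.symm k5, Ne.symm k6, Ne.symm k7, Ne.symm k8, Ne.symm k9, Ne.symm k10])
      simp [Fin.forall_fin_succ] at hτ
      constructor
      · apply NN_right τ; intro σ; simp [blk, hτ]
      · apply NN_right τ; intro σ; simp [blk, hτ]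
    refine ⟨_, _, ?_, fun u' v' w' y' z' k1 k2 k3 k4 k5 k6 k7 k8 k9 k10 =>
      ⟨(main u' v' w' y' z' k1 k2 k3 k4 k5 k6 k7 k8 k9 k10).1, (main u' v' w' y' z' k1 k2 k3 k4 k5 k6 k7 k8 k9 k10).2,
       (r3 u' v' w' y' z' k1 k2 k3 k4 k5 k6 k7 k8 k9 k10).trans (main u' v' w' y' z' k1 k2 k3 k4 k5 k6 k7 k8 k9 k10).1⟩⟩
    have S := six_split (blk u v w) u y z h4.symm h7.symm h10
    rw [hB u v w h1 h2 h3] at S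
    have m := main u v w z y h1 h2 h3 h7 h8 h9 h4 h5 h6 h10.symm
    have s1 := r3 u v w z y h1 h2 h3 h7 h8 h9 h4 h5 h6 h10.symm
    have s2 := r3 u v w y z h1 h2 h3 h4 h5 h6 h7 h8 h9 h10
    linarith [m.1, m.2]
  · refine ⟨B/6, B/6, by ring, fun u v w y z h1 h2 h3 h4 h5 h6 h7 h8 h9 h10 =>
      (H ⟨u, v, w, y, z, h1, h2, h3, h4, h5, h6, h7, h8, h9, h10⟩).elim⟩

set_option maxHeartbeats 2000000 in
lemma F_eq {n : ℕ} {B A1 A2 : ℚ} (hB : ∀ u v w : Fin n, u ≠ v → u ≠ w → v ≠ w → NN (blk u v w) = B)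
  (hA : ∀ u v w y z : Fin n, u ≠ v → u ≠ w → v ≠ w →
    y ≠ u → y ≠ v → y ≠ w → z ≠ u → z ≠ v → z ≠ w → y ≠ z →
    NN (fun σ => blk u v w σ ∧ σ u < σ z ∧ σ z < σ y) = A1 ∧
    NN (fun σ => blk u v w σ ∧ σ z < σ u ∧ σ u < σ y) = A2 ∧
    NN (fun σ => blk u v w σ ∧ σ y < σ z ∧ σ z < σ u) = A1) (u v w x y z : Fin n)
  (huv : u ≠ v) (huw : u ≠ w) (hvw : v ≠ w) (hxy : x ≠ y) (hxz : x ≠ z) (hyz : y ≠ z) :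
  NN (fun σ => blk u v w σ ∧ σ x < σ z ∧ σ z < σ y) = WW B A1 A2 u v w x y z := by
  have key : ∀ t : Fin n, (t = u ∨ t = v ∨ t = w) ∨ (t ≠ u ∧ t ≠ v ∧ t ≠ w) := by intro t; tauto
  have b0 := hB u v w huv huw hvw
  have h1 := huv.symm
  have h2 := huw.symm
  have h3 := hvw.symm
  rcases key x with hx | ⟨hx1, hx2, hx3⟩ <;>
  rcases key y with hy | ⟨hy1, hy2, hy3⟩ <;>
  rcases key z with hz | ⟨hz1, hz2, hz3⟩
  · rcases hx with hx | hx | hx <;> rcases hy with hy | hy | hy <;> rcases hz with hz | hz | hz <;>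
    first
    | (first | exact absurd (hx.trans hy.symm) hxy | exact absurd (hx.trans hz.symm) hxz | exact absurd (hy.trans hz.symm) hyz)
    | (subst x y z
       simp [WW, wt, cod, huv, huw, hvw, h1, h2, h3]
       first
       | (apply NN_zero; intro σ; simp only [blk, Fin.lt_def]; omega)
       | (rw [← b0]; apply NN_congr; intro σ; simp only [blk, Fin.lt_def]; omega))
  · have e : NN (fun σ => blk u v w σ ∧ σ x < σ z ∧ σ z < σ y) = 0 := by
      apply NN_zero; intro σ
      have := ne_val hz1 σ
      have := ne_val hz2 σ
      have := ne_val hz3 σ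
      rcases hx with rfl | rfl | rfl <;> rcases hy with rfl | rfl | rfl <;>
        simp only [blk, Fin.lt_def] <;> omega
    rw [e]
    rcases hx with rfl | rfl | rfl <;> rcases hy with rfl | rfl | rfl <;>
      first
      | exact absurd rfl hxy
      | simp [WW, wt, cod, huv, huw, hvw, h1, h2, h3, hz1, hz2, hz3]
  · have e := (half huv huw hvw hy1 hy2 hy3).1
    rw [b0] at e
    rcases hx with hx | hx | hx <;> rcases hz with hz | hz | hz <;>
    first
    | (exact absurd (hx.trans hz.symm) hxz)
    | (subst x z
       simp [WW, wt, cod, huv, huw, hvw, h1, h2, h3, hy1, hy2, hy3]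
       first
       | (apply NN_zero; intro σ; simp only [blk, Fin.lt_def]; omega)
       | (rw [← e]; apply NN_congr; intro σ
          have := ne_val hy1 σ
          have := ne_val hy2 σ
          have := ne_val hy3 σ
          simp only [blk, Fin.lt_def]; omega))
  · have e := (hA u v w y z huv huw hvw hy1 hy2 hy3 hz1 hz2 hz3 hyz).1
    have e' : WW B A1 A2 u v w x y z = A1 := by
      rcases hx with rfl | rfl | rfl <;> simp [WW, wt, cod, huv, huw, hvw, h1, h2, h3, hy1, hy2, hy3, hz1, hz2, hz3]
    rw [e', ← e]
    apply NN_congr; intro σ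
    have := ne_val hz1 σ
    have := ne_val hz2 σ
    have := ne_val hz3 σ
    rcases hx with rfl | rfl | rfl <;> simp only [blk, Fin.lt_def] <;> omega
  · have e := (half huv huw hvw hx1 hx2 hx3).2
    rw [b0] at e
    rcases hy with hy | hy | hy <;> rcases hz with hz | hz | hz <;>
    first
    | (exact absurd (hy.trans hz.symm) hyz)
    | (subst y z
       simp [WW, wt, cod, huv, huw, hvw, h1, h2, h3, hx1, hx2, hx3]
       first
       | (apply NN_zero; intro σ; simp only [blk, Fin.lt_def]; omega)
       | (rw [← e]; apply NN_congr; intro σ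
          have := ne_val hx1 σ
          have := ne_val hx2 σ
          have := ne_val hx3 σ
          simp only [blk, Fin.lt_def]; omega))
  · have e := (hA u v w x z huv huw hvw hx1 hx2 hx3 hz1 hz2 hz3 hxz).2.2
    have e' : WW B A1 A2 u v w x y z = A1 := by
      rcases hy with rfl | rfl | rfl <;> simp [WW, wt, cod, huv, huw, hvw, h1, h2, h3, hx1, hx2, hx3, hz1, hz2, hz3]
    rw [e', ← e]
    apply NN_congr; intro σ
    have := ne_val hz1 σ
    have := ne_val hz2 σ
    have := ne_val hz3 σ
    rcases hy with rfl | rfl | rfl <;> simp only [blk, Fin.lt_def] <;> omega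
  · have e := (hA u v w y x huv huw hvw hy1 hy2 hy3 hx1 hx2 hx3 hxy.symm).2.1
    have e' : WW B A1 A2 u v w x y z = A2 := by
      rcases hz with rfl | rfl | rfl <;> simp [WW, wt, cod, huv, huw, hvw, h1, h2, h3, hx1, hx2, hx3, hy1, hy2, hy3]
    rw [e', ← e]
    apply NN_congr; intro σ
    have := ne_val hx1 σ
    have := ne_val hx2 σ
    have := ne_val hx3 σ
    have := ne_val hy1 σ
    have := ne_val hy2 σ
    have := ne_val hy3 σ
    rcases hz with rfl | rfl | rfl <;> simp only [blk, Fin.lt_def] <;> omega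
  · rw [six hx1 hx2 hx3 hy1 hy2 hy3 hz1 hz2 hz3 hxy hxz hyz, b0]
    simp [WW, wt, cod, huv, huw, hvw, h1, h2, h3, hx1, hx2, hx3, hy1, hy2, hy3, hz1, hz2, hz3]


def TT {n : ℕ} (h : Fin n → Fin n → Fin n → ℚ) : ℚ :=
  ∑ u, ∑ v, ∑ w, if u ≠ v ∧ u ≠ w ∧ v ≠ w then h u v w else 0

lemma TT_12 {n : ℕ} (h : Fin n → Fin n → Fin n → ℚ) : TT h = TT (fun u v w => h v u w) := by
  unfold TT
  rw [Finset.sum_comm]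
  refine Finset.sum_congr rfl fun u _ => Finset.sum_congr rfl fun v _ => Finset.sum_congr rfl fun w _ => ?_
  refine if_congr ?_ rfl rfl
  tauto

lemma TT_23 {n : ℕ} (h : Fin n → Fin n → Fin n → ℚ) : TT h = TT (fun u v w => h u w v) := by
  unfold TT
  refine Finset.sum_congr rfl fun u _ => ?_
  rw [Finset.sum_comm]
  refine Finset.sum_congr rfl fun v _ => Finset.sum_congr rfl fun w _ => ?_
  refine if_congr ?_ rfl rfl
  tauto

lemma TT_add {n : ℕ} (h k : Fin n → Fin n → Fin n → ℚ) : TT (fun u v w => h u v w + k u v w) = TT h + TT k := by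
  unfold TT
  simp only [← Finset.sum_add_distrib]
  refine Finset.sum_congr rfl fun u _ => Finset.sum_congr rfl fun v _ => Finset.sum_congr rfl fun w _ => ?_
  split_ifs <;> simp

lemma TT_mul {n : ℕ} (c : ℚ) (h : Fin n → Fin n → Fin n → ℚ) : TT (fun u v w => c * h u v w) = c * TT h := by
  unfold TT
  simp only [Finset.mul_sum]
  refine Finset.sum_congr rfl fun u _ => Finset.sum_congr rfl fun v _ => Finset.sum_congr rfl fun w _ => ?_
  split_ifs <;> simp

lemma TT_congr {n : ℕ} {h k : Fin n → Fin n → Fin n → ℚ}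
   (H : ∀ u v w, u ≠ v → u ≠ w → v ≠ w → h u v w = k u v w) : TT h = TT k := by
  unfold TT
  refine Finset.sum_congr rfl fun u _ => Finset.sum_congr rfl fun v _ => Finset.sum_congr rfl fun w _ => ?_
  split_ifs with hh
  · exact H u v w hh.1 hh.2.1 hh.2.2
  · rfl

lemma TT_sym {n : ℕ} (h : Fin n → Fin n → Fin n → ℚ) :
    TT (fun u v w => h u v w + h u w v + h v u w + h v w u + h w u v + h w v u) = 6 * TT h := by
  simp only [TT_add]
  have a1 := TT_12 h
  have a2 := TT_23 h
  have a3 := TT_12 (fun u v w => h u w v)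
  have a4 := TT_23 (fun u v w => h v u w)
  have a5 := TT_12 (fun u v w => h w u v)
  linarith

lemma count_cyc {n : ℕ} (π : Perm (Fin n)) (k : ℕ) [hk : Fact k.Prime] :
    (k * π.partition.parts.count k : ℕ) = #{u : Fin n | π u ≠ u ∧ (π ^ k) u = u} := by
  have hk1 : k ≠ 1 := hk.out.ne_one
  rw [Perm.parts_partition, Multiset.count_add, Multiset.count_replicate, if_neg hk1.symm, add_zero,
    Perm.cycleType_def, Multiset.count_map]
  have e : ({u : Fin n | π u ≠ u ∧ (π ^ k) u = u} : Finset (Fin n)) =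
    (π.cycleFactorsFinset.filter (fun c => k = #c.support)).biUnion (fun c => c.support) := by
    ext u
    simp only [mem_filter, mem_univ, true_and, mem_biUnion]
    have cr : π u ≠ u → ((π ^ k) u = u ↔ k = #(π.cycleOf u).support) := by
      intro hu
      have hc := Perm.isCycle_cycleOf π hu
      have hu' : π.cycleOf u u ≠ u := by rwa [Perm.cycleOf_apply_self]
      rw [← hc.orderOf, ← Perm.cycleOf_pow_apply_self, ← hc.pow_eq_one_iff' hu', ← orderOf_dvd_iff_pow_eq_one,
        Nat.dvd_prime hk.out]
      have : orderOf (π.cycleOf u) ≠ 1 := by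
        rw [Ne, orderOf_eq_one_iff]; exact hc.ne_one
      constructor
      · rintro (h | h)
        · exact (this h).elim
        · exact h.symm
      · intro h; right; exact h.symm
    constructor
    · rintro ⟨hu, h⟩
      refine ⟨π.cycleOf u, ⟨Perm.cycleOf_mem_cycleFactorsFinset_iff.2 (Perm.mem_support.2 hu), (cr hu).1 h⟩, ?_⟩
      rw [Perm.mem_support]; rwa [Perm.cycleOf_apply_self]
    · rintro ⟨c, ⟨hc, hck⟩, huc⟩
      have := Perm.cycle_is_cycleOf huc hc
      have hu : π u ≠ u := Perm.mem_support.1 (Perm.mem_cycleFactorsFinset_support_le hc huc)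
      refine ⟨hu, (cr hu).2 ?_⟩
      rw [← this]; exact hck
  rw [e, Finset.card_biUnion, Finset.sum_congr rfl (fun c hc => (mem_filter.1 hc).2.symm)]
  · rw [Finset.sum_const, smul_eq_mul, mul_comm]; rfl
  · intro c hc d hd hcd
    have := π.cycleFactorsFinset_pairwise_disjoint (mem_coe.2 (mem_filter.1 hc).1) (mem_coe.2 (mem_filter.1 hd).1) hcd
    exact Perm.disjoint_iff_disjoint_support.1 this

lemma count_one {n : ℕ} (π : Perm (Fin n)) :
    π.partition.parts.count 1 = #{u : Fin n | π u = u} := by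
  rw [Perm.parts_partition, Multiset.count_add, Multiset.count_replicate_self]
  have : π.cycleType.count 1 = 0 := by
    rw [Multiset.count_eq_zero]; intro h; exact absurd (Perm.one_lt_of_mem_cycleType h) (by norm_num)
  rw [this, zero_add, ← Finset.card_compl]
  congr 1
  ext u; simp

lemma fsum {n : ℕ} (P : Fin n → Prop) [DecidablePred P] : (∑ u, if P u then (1:ℚ) else 0) = #{u | P u} := by
  simp

lemma T_one {n : ℕ} : TT (n := n) (fun _ _ _ => 1) = n * (n-1) * (n-2) := by
  have e : ∀ u v w : Fin n, (if u ≠ v ∧ u ≠ w ∧ v ≠ w then (1:ℚ) else 0) = 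
   1 - (if u = v then 1 else 0) - (if u = w then 1 else 0) - (if v = w then 1 else 0) +
     2 * (if u = v then (if u = w then 1 else 0) else 0) := by
    intro u v w
    split_ifs <;> simp_all <;> norm_num
  simp only [TT, e]
  simp [Finset.sum_add_distrib, Finset.sum_sub_distrib, ← Finset.mul_sum]
  ring

lemma T_LLL {n : ℕ} (f : Fin n → ℚ) (hf : ∀ u, f u = 0 ∨ f u = 1) (p : ℚ) (hp : ∑ u, f u = p) :
   TT (fun u v w => f u * f v * f w) = p * (p-1) * (p-2) := by
  have f2 : ∀ u, f u * f u = f u := by intro u; rcases hf u with h | h <;> simp [h]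
  have e : ∀ u v w : Fin n, (if u ≠ v ∧ u ≠ w ∧ v ≠ w then f u * f v * f w else 0) = 
   f u * f v * f w - (if u = v then f u * f w else 0) - (if u = w then f u * f v else 0)
    - (if v = w then f u * f v else 0) +
     2 * (if u = v then (if u = w then f u else 0) else 0) := by
    intro u v w
    split_ifs <;> simp_all <;> norm_num <;> ring_nf <;> simp [pow_two, f2]
  simp only [TT, e]
  simp only [Finset.sum_add_distrib, Finset.sum_sub_distrib, ← Finset.mul_sum, ← Finset.sum_mul, hp, Finset.sum_ite_eq, mem_univ, if_true, f2]
  have g : ∀ x, (∑ x_1, ∑ x_2, if x = x_1 then f x * f x_2 else 0) = f x * p := by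
    intro x; rw [Finset.sum_comm]; simp [← Finset.mul_sum, hp]
  have g2 : ∀ x, (∑ x_1, ∑ x_2, if x = x_1 then if x = x_2 then f x else 0 else 0) = f x := by
    intro x; rw [Finset.sum_comm]; simp
  simp only [g, g2, ← Finset.sum_mul, hp]
  simp [← Finset.mul_sum, ← Finset.sum_mul, hp, mul_assoc, f2]
  ring

lemma T_LE {n : ℕ} (π : Perm (Fin n)) :
   TT (fun u v w => if π u = u ∧ π v = w then 1 else 0) = (#{u | π u = u} : ℚ) * (n - #{u | π u = u}) := by
  have e : ∀ u v w : Fin n, (if u ≠ v ∧ u ≠ w ∧ v ≠ w then (if π u = u ∧ π v = w then (1:ℚ) else 0) else 0) =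
     if π v = w then ((if π u = u then 1 else 0) * (1 - (if π v = v then 1 else 0))) else 0 := by
    intro u v w
    by_cases h : π v = w
    · subst h
      by_cases h2 : π u = u
      · by_cases h3 : π v = v
        · simp [h3]
        · have h4 : u ≠ v := by rintro rfl; exact h3 h2
          have h5 : u ≠ π v := by
            intro h; rw [← h2] at h; exact h4 (π.injective h)
          simp [h2, h3, h4, h5, Ne.symm h3]
      · simp [h2]
    · simp [h]
  simp only [TT, e, Finset.sum_ite_eq, mem_univ, if_true, ← Finset.mul_sum, ← Finset.sum_mul, Finset.sum_sub_distrib, fsum]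
  simp

lemma T_path {n : ℕ} (π : Perm (Fin n)) :
   TT (fun u v w => if π u = v ∧ π v = w then 1 else 0) =
     (n - #{u | π u = u} - #{u | π u ≠ u ∧ (π ^ 2) u = u} : ℚ) := by
  have e : ∀ u v w : Fin n, (if u ≠ v ∧ u ≠ w ∧ v ≠ w then (if π u = v ∧ π v = w then (1:ℚ) else 0) else 0) =
     if π u = v then (if π v = w then (1 - (if π u = u then 1 else 0) - (if π u ≠ u ∧ (π ^ 2) u = u then 1 else 0)) else 0) else 0 := by
    intro u v w
    by_cases h : π u = v
    · by_cases h' : π v = w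
      · subst h; subst h'
        by_cases h2 : π u = u
        · simp [h2]
        · have h3 : π u ≠ π (π u) := fun h => h2 (π.injective h).symm
          by_cases h4 : π (π u) = u
          · simp [h2, h4, pow_two]
          · simp [h2, h3, h4, pow_two, Ne.symm h2, Ne.symm h4]
      · simp [h']
    · simp [h]
  simp only [TT, e]
  have g : ∀ (x : Fin n) (c : ℚ), (∑ y, ∑ z, if π x = y then (if π y = z then c else 0) else 0) = c := by
    intro x c
    have : ∀ y, (∑ z, if π x = y then (if π y = z then c else 0) else 0) = if π x = y then c else 0 := by
      intro y; split_ifs <;> simp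
    simp [this]
  simp only [g, Finset.sum_sub_distrib, fsum]
  simp

lemma T_C3 {n : ℕ} (π : Perm (Fin n)) :
   TT (fun u v w => if π u = v ∧ π v = w ∧ π w = u then 1 else 0) =
     (#{u | π u ≠ u ∧ (π ^ 3) u = u} : ℚ) := by
  have e : ∀ u v w : Fin n, (if u ≠ v ∧ u ≠ w ∧ v ≠ w then (if π u = v ∧ π v = w ∧ π w = u then (1:ℚ) else 0) else 0) =
     if π u = v then (if π v = w then (if π u ≠ u ∧ (π ^ 3) u = u then 1 else 0) else 0) else 0 := by
    intro u v w
    by_cases h : π u = v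
    · by_cases h' : π v = w
      · subst h; subst h'
        by_cases h2 : π u = u
        · simp [h2]
        · have h3 : π u ≠ π (π u) := fun h => h2 (π.injective h).symm
          by_cases h4 : π (π (π u)) = u
          · have h5 : u ≠ π (π u) := by
              intro h; rw [← h] at h4; exact h2 h4
            simp [h2, h3, h4, h5, pow_succ, Ne.symm h2]
          · simp [h4, pow_succ]
      · simp [h']
    · simp [h]
  simp only [TT, e]
  have g : ∀ (x : Fin n) (c : ℚ), (∑ y, ∑ z, if π x = y then (if π y = z then c else 0) else 0) = c := by
    intro x c
    have : ∀ y, (∑ z, if π x = y then (if π y = z then c else 0) else 0) = if π x = y then c else 0 := by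
      intro y; split_ifs <;> simp
    simp [this]
  simp only [g, fsum]

lemma conj_sum {n : ℕ} (lam : n.Partition) (f : Perm (Fin n) → ℚ) (σ : Perm (Fin n)) :
    ∑ π ∈ conjClass n lam, f (σ * π * σ⁻¹) = ∑ π ∈ conjClass n lam, f π := by
  refine Finset.sum_equiv (MulAut.conj σ).toEquiv (fun π => ?_) (fun π _ => by simp [MulAut.conj_apply])
  have h : (MulAut.conj σ π).partition = π.partition := by
    rw [← Perm.partition_eq_of_isConj]
    exact (isConj_iff.2 ⟨σ, by simp [MulAut.conj_apply]⟩ : IsConj π _).symm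
  have h' : (MulAut.conj σ).toEquiv π = MulAut.conj σ π := rfl
  simp only [conjClass, mem_filter, mem_univ, true_and, h', h]

def gg {n : ℕ} (π : Perm (Fin n)) : ℚ :=
  ∑ a : Fin n, ∑ b : Fin n, ∑ c : Fin n,
    if (a : ℕ) + 1 = (b : ℕ) ∧ (b : ℕ) + 1 = (c : ℕ) ∧ π a < π c ∧ π c < π b then 1 else 0

def gg' {n : ℕ} (π : Perm (Fin n)) : ℚ :=
  ∑ a : Fin n, ∑ b : Fin n, ∑ c : Fin n,
    if (a : ℕ) + 1 = (b : ℕ) ∧ (b : ℕ) + 1 = (c : ℕ) ∧ π b < π a ∧ π a < π c then 1 else 0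

lemma re3 {n : ℕ} (σ : Perm (Fin n)) (f : Fin n → Fin n → Fin n → ℚ) :
    ∑ a, ∑ b, ∑ c, f a b c = ∑ u, ∑ v, ∑ w, f (σ u) (σ v) (σ w) := by
  rw [← Equiv.sum_comp σ]
  refine Finset.sum_congr rfl fun u _ => ?_
  rw [← Equiv.sum_comp σ]
  refine Finset.sum_congr rfl fun v _ => ?_
  rw [← Equiv.sum_comp σ]

lemma gg_rev {n : ℕ} (π : Perm (Fin n)) : gg' π = gg (Fin.revPerm * π * Fin.revPerm⁻¹) := by
  unfold gg gg'
  rw [re3 Fin.revPerm]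
  rw [Finset.sum_comm]
  conv_rhs => rw [Finset.sum_comm]
  refine Finset.sum_congr rfl fun b _ => ?_
  rw [Finset.sum_comm]
  refine Finset.sum_congr rfl fun a _ => Finset.sum_congr rfl fun c _ => ?_
  refine if_congr ?_ rfl rfl
  have hr : (Fin.revPerm : Perm (Fin n))⁻¹ = Fin.revPerm := by
    ext x; simp [Perm.inv_def]
  simp only [hr, Perm.mul_apply, Fin.revPerm_apply, Fin.rev_lt_rev, Fin.val_rev]
  have := a.2
  have := b.2
  have := c.2
  constructor <;> rintro ⟨h1, h2, h3, h4⟩ <;> refine ⟨by omega, by omega, ?_, ?_⟩ <;> assumption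

lemma consec {n : ℕ} (hn : 3 ≤ n) : (∑ a : Fin n, ∑ b : Fin n, ∑ c : Fin n,
    if (a : ℕ) + 1 = (b : ℕ) ∧ (b : ℕ) + 1 = (c : ℕ) then (1:ℚ) else 0) = n - 2 := by
  obtain ⟨m, rfl⟩ : ∃ m, n = m + 2 := ⟨n - 2, by omega⟩
  have : (((Finset.univ : Finset (Fin (m+2) × Fin (m+2) × Fin (m+2))).filter fun x =>
          (x.1 : ℕ) + 1 = (x.2.1 : ℕ) ∧ (x.2.1 : ℕ) + 1 = (x.2.2 : ℕ)).card) = m := by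
    conv_rhs => rw [← Finset.card_range m]
    refine Finset.card_bij (fun x _ => (x.1 : ℕ)) ?_ ?_ ?_
    · rintro ⟨a, b, c⟩ h
      simp only [mem_filter, mem_univ, true_and, mem_range] at h ⊢
      have := c.2
      omega
    · rintro ⟨a, b, c⟩ h ⟨a', b', c'⟩ h' e
      simp only [mem_filter, mem_univ, true_and, Prod.mk.injEq, Fin.ext_iff] at h h' e ⊢
      omega
    · intro k hk
      rw [mem_range] at hk
      refine ⟨(⟨k, by omega⟩, ⟨k+1, by omega⟩, ⟨k+2, by omega⟩), by simp, rfl⟩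
  have h2 : ((m : ℕ) : ℚ) = ((m + 2 : ℕ) : ℚ) - 2 := by push_cast; ring
  rw [← h2]
  conv_rhs => rw [← this]
  rw [Finset.card_filter]
  push_cast
  simp only [Fintype.sum_prod_type]

lemma comm3 {n : ℕ} (f : Perm (Fin n) → Fin n → Fin n → Fin n → ℚ) :
    ∑ σ, ∑ u, ∑ v, ∑ w, f σ u v w = ∑ u, ∑ v, ∑ w, ∑ σ, f σ u v w := by
  rw [Finset.sum_comm]
  refine Finset.sum_congr rfl fun u _ => ?_
  rw [Finset.sum_comm]
  refine Finset.sum_congr rfl fun v _ => ?_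
  rw [Finset.sum_comm]

lemma to_TT {n : ℕ} (P : Fin n → Fin n → Fin n → Perm (Fin n) → Prop)
    (hP : ∀ u v w σ, P u v w σ → blk u v w σ) :
    ∑ u, ∑ v, ∑ w, NN (P u v w) = TT (fun u v w => NN (P u v w)) := by
  unfold TT
  refine Finset.sum_congr rfl fun u _ => Finset.sum_congr rfl fun v _ => Finset.sum_congr rfl fun w _ => ?_
  split_ifs with h
  · rfl
  · apply NN_zero
    intro σ hσ
    have hb := hP u v w σ hσ
    apply h
    unfold blk at hb
    refine ⟨?_, ?_, ?_⟩ <;> rintro rfl <;> omega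

lemma iteq {P Q : Prop} {dP : Decidable P} {dQ : Decidable Q} (h : P ↔ Q) :
    (if P then (1:ℚ) else 0) = if Q then 1 else 0 := if_congr h rfl rfl

lemma avg {n : ℕ} (hn : 3 ≤ n) (π : Perm (Fin n)) (p q r : ℚ) (hp : p = π.partition.parts.count 1)
    (hq : q = π.partition.parts.count 2) (hr : r = π.partition.parts.count 3) :
    (∑ σ : Perm (Fin n), gg (σ * π * σ⁻¹)) * (n * (n - 1)) =
      (Fintype.card (Perm (Fin n)) : ℚ) * (n * (n-1) * (n-2) / 6 + p * (n - p) / 2 - (n - p - 2 * q) / 2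
        - p * (p-1) * (p-2) / 6 + r / 2) := by
  classical
  obtain ⟨B, hB⟩ := exB (n := n)
  obtain ⟨A1, A2, hAB, hA⟩ := exA hB
  have hBv : B * (n * (n-1) * (n-2)) = (Fintype.card (Perm (Fin n)) : ℚ) * (n - 2) := by
    have e1 : ∑ u, ∑ v, ∑ w, NN (blk (n := n) u v w) = (Fintype.card (Perm (Fin n)) : ℚ) * (n - 2) := by
      unfold NN
      rw [← comm3]
      trans ∑ _σ : Perm (Fin n), ((n:ℚ) - 2)
      · refine Finset.sum_congr rfl fun σ _ => ?_
        rw [← consec hn]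
        conv_rhs => rw [re3 σ]
        refine Finset.sum_congr rfl fun u _ => Finset.sum_congr rfl fun v _ => Finset.sum_congr rfl fun w _ => ?_
        exact iteq Iff.rfl
      · simp; ring
    rw [← e1, to_TT (fun u v w => blk u v w) (fun u v w σ h => h), ← T_one, ← TT_mul]
    refine TT_congr fun u v w h1 h2 h3 => ?_
    rw [hB u v w h1 h2 h3, mul_one]
  have hn2 : (n : ℚ) - 2 ≠ 0 := by
    have : (3:ℚ) ≤ n := by exact_mod_cast hn
    linarith
  have hBv' : B * (n * (n-1)) = (Fintype.card (Perm (Fin n)) : ℚ) := by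
    apply mul_right_cancel₀ hn2
    linarith
  have e2 : (∑ σ : Perm (Fin n), gg (σ * π * σ⁻¹)) =
      TT (fun u v w => NN (fun σ => blk u v w σ ∧ σ (π u) < σ (π w) ∧ σ (π w) < σ (π v))) := by
    rw [← to_TT (fun u v w σ => blk u v w σ ∧ σ (π u) < σ (π w) ∧ σ (π w) < σ (π v)) (fun u v w σ h => h.1)]
    unfold NN
    rw [← comm3]
    refine Finset.sum_congr rfl fun σ _ => ?_
    unfold gg
    rw [re3 σ]
    refine Finset.sum_congr rfl fun u _ => Finset.sum_congr rfl fun v _ => Finset.sum_congr rfl fun w _ => ?_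
    apply iteq
    simp [blk, and_assoc]
  have e3 : TT (fun u v w => NN (fun σ => blk u v w σ ∧ σ (π u) < σ (π w) ∧ σ (π w) < σ (π v))) =
      TT (fun u v w => RR B u v w (π u) (π v) (π w)) := by
    have e4 : TT (fun u v w => NN (fun σ => blk u v w σ ∧ σ (π u) < σ (π w) ∧ σ (π w) < σ (π v))) =
       TT (fun u v w => WW B A1 A2 u v w (π u) (π v) (π w)) :=
      TT_congr fun u v w h1 h2 h3 => F_eq hB hA u v w _ _ _ h1 h2 h3 (by simpa) (by simpa) (by simpa)
    rw [e4]
    have s1 := TT_sym (fun u v w => WW B A1 A2 u v w (π u) (π v) (π w))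
    have s2 := TT_sym (fun u v w => RR B u v w (π u) (π v) (π w))
    have s3 : TT (fun u v w => WW B A1 A2 u v w (π u) (π v) (π w) + WW B A1 A2 u w v (π u) (π w) (π v) +
      WW B A1 A2 v u w (π v) (π u) (π w) + WW B A1 A2 v w u (π v) (π w) (π u) +
      WW B A1 A2 w u v (π w) (π u) (π v) + WW B A1 A2 w v u (π w) (π v) (π u)) = _ :=
      TT_congr fun u v w h1 h2 h3 => sym_id B A1 A2 hAB u v w (π u) (π v) (π w) h1 h2 h3 (by simpa) (by simpa) (by simpa)
    linarith
  have f1 : TT (fun u v w => if π u = u ∧ π v = v ∧ π w = w then (1:ℚ) else 0) = p * (p-1) * (p-2) := by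
    rw [← T_LLL (fun u => if π u = u then (1:ℚ) else 0) (fun u => by by_cases h : π u = u <;> simp [h]) p
      (by rw [hp, count_one, fsum])]
    refine TT_congr fun u v w _ _ _ => ?_
    by_cases h1 : π u = u <;> by_cases h2 : π v = v <;> by_cases h3 : π w = w <;> simp [h1, h2, h3]
  have f2 := T_LE π
  have f3 := T_path π
  have f4 := T_C3 π
  have : Fact (Nat.Prime 2) := ⟨Nat.prime_two⟩
  have : Fact (Nat.Prime 3) := ⟨Nat.prime_three⟩
  rw [← count_one, ← hp] at f2
  rw [← count_one, ← count_cyc π 2] at f3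
  rw [← count_cyc π 3] at f4
  push_cast at f3 f4
  rw [← hp, ← hq] at f3
  rw [← hr] at f4
  have e5 : TT (fun u v w => RR B u v w (π u) (π v) (π w)) =
      B * (n * (n-1) * (n-2) / 6 + p * (n - p) / 2 - (n - p - 2 * q) / 2
        - p * (p-1) * (p-2) / 6 + r / 2) := by
    have : TT (fun u v w => RR B u v w (π u) (π v) (π w)) =
      TT (fun u v w => (B/6) * 1 + (B/2) * (if π u = u ∧ π v = w then 1 else 0) +
        (-B/2) * (if π u = v ∧ π v = w then 1 else 0) + (-B/6) * (if π u = u ∧ π v = v ∧ π w = w then 1 else 0)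
        + (B/6) * (if π u = v ∧ π v = w ∧ π w = u then 1 else 0)) := by
      refine TT_congr fun u v w _ _ _ => ?_
      unfold RR
      ring
    rw [this]
    simp only [TT_add, TT_mul, f1, f2, f3, f4]
    rw [T_one]
    ring
  rw [e2, e3, e5, ← hBv']
  ring

lemma main13 (n : ℕ) (hn : 3 ≤ n) (lam : n.Partition)
    (p q r : ℚ)
    (hp : p = (lam.parts.count 1 : ℚ)) (hq : q = (lam.parts.count 2 : ℚ))
    (hr : r = (lam.parts.count 3 : ℚ)) :
    (∑ π ∈ conjClass n lam, gg π) * (n * (n - 1)) = (#(conjClass n lam) : ℚ) *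
      (n * (n-1) * (n-2) / 6 + p * (n - p) / 2 - (n - p - 2 * q) / 2
        - p * (p-1) * (p-2) / 6 + r / 2) := by
  have h0 : (Fintype.card (Perm (Fin n)) : ℚ) ≠ 0 := by
    exact_mod_cast Fintype.card_ne_zero
  apply mul_left_cancel₀ h0
  have h1 : (Fintype.card (Perm (Fin n)) : ℚ) * (∑ π ∈ conjClass n lam, gg π) =
     ∑ π ∈ conjClass n lam, ∑ σ : Perm (Fin n), gg (σ * π * σ⁻¹) := by
    rw [Finset.sum_comm]
    simp only [conj_sum lam gg]
    simp
  rw [← mul_assoc, h1, Finset.sum_mul]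
  rw [Finset.sum_congr rfl (fun π hπ => avg hn π p q r ?_ ?_ ?_)]
  · simp; ring
  all_goals
    have : π.partition.parts = lam.parts := by simpa [conjClass] using hπ
    rw [this]; assumption

theorem stmt13 (n : ℕ) (hn : 3 ≤ n) (lam : n.Partition)
    (p q r X₁ X₂ X₃ X₄ : ℚ)
    (hp : p = (lam.parts.count 1 : ℚ)) (hq : q = (lam.parts.count 2 : ℚ))
    (hr : r = (lam.parts.count 3 : ℚ))
    (hX1 : X₁ = p - 1) (hX2 : X₂ = (p - 1) * (p - 2) / 2 + q - 1)
    (hX3 : X₃ = (p - 1) * (p - 2) / 2 - q)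
    (hX4 : X₄ = (p - 1) * (p - 2) * (p - 3) / 3 - p - r + 2) :
    ((∑ π ∈ conjClass n lam,
      ((((Finset.univ : Finset (Fin n × Fin n × Fin n)).filter fun x =>
          (x.1 : ℕ) + 1 = (x.2.1 : ℕ) ∧ (x.2.1 : ℕ) + 1 = (x.2.2 : ℕ) ∧ π x.1 < π x.2.2 ∧ π x.2.2 < π x.2.1).card : ℚ)))
      = ((conjClass n lam).card : ℚ) *
        (((n : ℚ) - 2) / 6 + ((n : ℚ) - 3) * X₁ / (2 * (n : ℚ) * ((n : ℚ) - 1))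
          - X₂ / (2 * (n : ℚ) * ((n : ℚ) - 1)) - 3 * X₃ / (2 * (n : ℚ) * ((n : ℚ) - 1))
          - X₄ / (2 * (n : ℚ) * ((n : ℚ) - 1)))) ∧
    ((∑ π ∈ conjClass n lam,
      ((((Finset.univ : Finset (Fin n × Fin n × Fin n)).filter fun x =>
          (x.1 : ℕ) + 1 = (x.2.1 : ℕ) ∧ (x.2.1 : ℕ) + 1 = (x.2.2 : ℕ) ∧ π x.2.1 < π x.1 ∧ π x.1 < π x.2.2).card : ℚ)))
      = ((conjClass n lam).card : ℚ) *
        (((n : ℚ) - 2) / 6 + ((n : ℚ) - 3) * X₁ / (2 * (n : ℚ) * ((n : ℚ) - 1))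
          - X₂ / (2 * (n : ℚ) * ((n : ℚ) - 1)) - 3 * X₃ / (2 * (n : ℚ) * ((n : ℚ) - 1))
          - X₄ / (2 * (n : ℚ) * ((n : ℚ) - 1)))) := by
  have hn3 : (3:ℚ) ≤ n := by exact_mod_cast hn
  have hN : ((n : ℚ) * (n - 1)) ≠ 0 := by
    apply mul_ne_zero <;> linarith
  have hN1 : (n : ℚ) ≠ 0 := by linarith
  have hN2 : (n : ℚ) - 1 ≠ 0 := by linarith
  have M := main13 n hn lam p q r hp hq hr
  have fin : (∑ π ∈ conjClass n lam, gg π) = ((conjClass n lam).card : ℚ) *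
        (((n : ℚ) - 2) / 6 + ((n : ℚ) - 3) * X₁ / (2 * (n : ℚ) * ((n : ℚ) - 1))
          - X₂ / (2 * (n : ℚ) * ((n : ℚ) - 1)) - 3 * X₃ / (2 * (n : ℚ) * ((n : ℚ) - 1))
          - X₄ / (2 * (n : ℚ) * ((n : ℚ) - 1))) := by
    apply mul_right_cancel₀ hN
    rw [M, hX1, hX2, hX3, hX4]
    field_simp
    ring
  constructor
  · rw [← fin]
    refine Finset.sum_congr rfl fun π _ => ?_
    rw [Finset.card_filter]
    push_cast
    simp only [Fintype.sum_prod_type]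
    rfl
  · rw [← fin, ← conj_sum lam gg Fin.revPerm]
    refine Finset.sum_congr rfl fun π _ => ?_
    rw [← gg_rev, Finset.card_filter]
    push_cast
    simp only [Fintype.sum_prod_type]
    rfl
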